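/- Let X be an N-dimensional random vector whose distribution is absolutely continuous with respect to N-dimensional Lebesgue measure, with zero mean and positive definite covariance matrix C_X known a priori, and let W be the orthogonal matrix from the eigenvalue decomposition C_X = W Σ Wᵀ. For Y = WᵀX and the projection Y_M = [Y₁,…,Y_M] onto the first M < N coordinates, the relative information loss is l(X→Y_M) = (N−M)/N. -/

import Mathlib

/-!
The conditional entropy of the quantized vector given the first `M` of `N` coordinates in an
orthonormal basis is asymptotic to `(N - M) * log k` (`tendsto_condEnt_div_log`). For `M = 0` the
condition is trivial and this gives the asymptotics `N * log k` of the entropy itself; the relative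
information loss is the quotient of the two rates. Write `V = Wᵀ`.

*Upper bound.* Gibbs' inequality bounds the entropy given `y` by a cross-entropy with any weights of
bounded total mass (`lintegral_eEnt_le`). The weights are taken from the product of two-sided
exponential densities in the coordinates of `Vx`: of rate `k` and centred at `y` in the observed
coordinates, of rate `1` in the others. Their cross-entropy is `(N - M) * log k + O(1)`, the error
being controlled by `E|(VX)_i|` (`lintegral_eEnt_quant_le`). First moments are finite because a
positive definite matrix has nonzero diagonal entries.

*Lower bound.* The law of `VX` is absolutely continuous with respect to the product of the law of
the observed coordinates with Lebesgue measure, hence bounded by a multiple of it off an event of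
small probability (`exists_dominated_set`). A fibre of the projection meets a cell in a set of volume
`O(k⁻¹ ^ (N - M))`, and therefore conditional cell probabilities are of this order on a set of
probability close to one (`exists_event_cell_le`). Markov's inequality turns this into a lower bound
for the conditional entropy (`le_lintegral_eEnt`).

Entropies are handled as sums in `ℝ≥0∞` (`eEnt`), where no summability question arises; finiteness
of the upper bound allows the return to the real-valued series and to the Bochner integral.
-/

open MeasureTheory ProbabilityTheory Filter Real Set

/-- Component quantization `x ↦ ⌊kx⌋/k`. -/
noncomputable def qz (k : ℕ) (x : ℝ) : ℝ := ⌊(k : ℝ) * x⌋ / k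

/-- Shannon entropy (in nats) of a measure, computed from its atoms. -/
noncomputable def mEnt {α : Type*} [MeasurableSpace α] (μ : Measure α) : ℝ :=
  ∑' a : α, Real.negMulLog (μ {a}).toReal

/-- Conditional Shannon entropy `H(Z | Y)`, via the regular conditional distribution. -/
noncomputable def condEnt {Ω α β : Type*} [MeasurableSpace Ω] [MeasurableSpace α]
    [StandardBorelSpace α] [Nonempty α] [MeasurableSpace β]
    (P : Measure Ω) [IsFiniteMeasure P] (Z : Ω → α) (Y : Ω → β) : ℝ :=
  ∫ y, mEnt ((condDistrib Z Y P) y) ∂(P.map Y)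

open scoped ENNReal

/-! ### Entropy bounds -/

/-- Shannon entropy as an extended nonnegative real, with value `∞` where the series diverges. -/
noncomputable def eEnt {α : Type*} [MeasurableSpace α] (μ : Measure α) : ℝ≥0∞ :=
  ∑' a : α, ENNReal.ofReal (Real.negMulLog (μ {a}).toReal)

lemma negMulLog_toReal_nonneg {α : Type*} [MeasurableSpace α] (μ : Measure α)
    [IsProbabilityMeasure μ] (s : Set α) : 0 ≤ Real.negMulLog (μ s).toReal :=
  Real.negMulLog_nonneg ENNReal.toReal_nonneg
    (ENNReal.toReal_le_of_le_ofReal zero_le_one (by simpa using prob_le_one))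

/-- Both sides are `0` when the entropy series diverges. -/
lemma mEnt_eq_toReal {α : Type*} [MeasurableSpace α] (μ : Measure α) [IsProbabilityMeasure μ] :
    mEnt μ = (eEnt μ).toReal := by
  unfold mEnt eEnt
  rw [ENNReal.tsum_toReal_eq (fun _ => ENNReal.ofReal_ne_top)]
  refine tsum_congr fun a => ?_
  rw [ENNReal.toReal_ofReal (negMulLog_toReal_nonneg μ _)]

lemma eEnt_eq_tsum_subtype {α : Type*} [MeasurableSpace α] (μ : Measure α)
    {L : Set α} (hL : μ Lᶜ = 0) :
    eEnt μ = ∑' a : L, ENNReal.ofReal (Real.negMulLog (μ {(a : α)}).toReal) := by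
  unfold eEnt
  symm
  apply tsum_subtype_eq_of_support_subset
    (f := fun a => ENNReal.ofReal (Real.negMulLog (μ {a}).toReal))
  intro a ha
  by_contra haL
  apply ha
  have : μ {a} = 0 := measure_mono_null (by simpa using haL) hL
  simp [this]

/-- The termwise form of Gibbs' inequality, with `exp (-φ)` as comparison weight; the weights need
not add up to one. -/
lemma negMulLog_le_gibbs {p : ℝ} (hp : 0 ≤ p) (φ : ℝ) :
    Real.negMulLog p ≤ p * φ + Real.exp (-φ) := by
  rcases hp.eq_or_lt with rfl | hp
  · simpa using (Real.exp_pos _).le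
  · have h1 := Real.log_le_sub_one_of_pos (div_pos (Real.exp_pos (-φ)) hp)
    rw [Real.log_div (Real.exp_pos _).ne' hp.ne', Real.log_exp] at h1
    have h2 := mul_le_mul_of_nonneg_left h1 hp.le
    have h3 : p * (Real.exp (-φ) / p - 1) = Real.exp (-φ) - p := by field_simp
    rw [h3] at h2
    unfold Real.negMulLog
    nlinarith

/-- Gibbs' inequality for a measure concentrated on a countable set. -/
lemma eEnt_le_gibbs {α : Type*} [MeasurableSpace α] [MeasurableSingletonClass α] (μ : Measure α)
    [IsProbabilityMeasure μ] {L : Set α} (hLc : L.Countable) (hL : μ Lᶜ = 0) (φ : α → ℝ)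
    (hφ : ∀ a, 0 ≤ φ a) :
    eEnt μ ≤ ∫⁻ a, ENNReal.ofReal (φ a) ∂μ + ∑' a : L, ENNReal.ofReal (Real.exp (-φ a)) := by
  rw [eEnt_eq_tsum_subtype μ hL]
  calc _ ≤ ∑' a : L, (ENNReal.ofReal (φ a) * μ {(a : α)} + ENNReal.ofReal (Real.exp (-φ a))) := by
        refine ENNReal.tsum_le_tsum fun a => ?_
        refine (ENNReal.ofReal_le_ofReal
          (negMulLog_le_gibbs ENNReal.toReal_nonneg (φ a))).trans ?_
        rw [ENNReal.ofReal_add (mul_nonneg ENNReal.toReal_nonneg (hφ a)) (Real.exp_pos _).le,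
          mul_comm, ENNReal.ofReal_mul (hφ a), ENNReal.ofReal_toReal (measure_ne_top _ _)]
    _ = ∫⁻ a in L, ENNReal.ofReal (φ a) ∂μ + ∑' a : L, ENNReal.ofReal (Real.exp (-φ a)) := by
        rw [ENNReal.tsum_add, lintegral_countable _ hLc]
    _ ≤ _ := by gcongr; exact Measure.restrict_le_self

section Conditional

variable {Ω α β : Type*} [MeasurableSpace Ω] [MeasurableSpace α]
    [StandardBorelSpace α] [Nonempty α] [MeasurableSpace β]
    (P : Measure Ω) [IsProbabilityMeasure P] {Z : Ω → α} {Y : Ω → β}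

lemma condDistrib_compl_eq_zero (hZ : Measurable Z) (hY : Measurable Y) {L : Set α}
    (hLc : L.Countable) (hZL : ∀ ω, Z ω ∈ L) :
    ∀ᵐ y ∂(P.map Y), condDistrib Z Y P y Lᶜ = 0 := by
  have hm : MeasurableSet Lᶜ := hLc.measurableSet.compl
  refine (lintegral_eq_zero_iff (Kernel.measurable_coe _ hm)).1 ?_
  rw [lintegral_map (Kernel.measurable_coe _ hm) hY]
  have := setLIntegral_preimage_condDistrib (μ := P) hY hZ.aemeasurable hm MeasurableSet.univ
  rw [preimage_univ, Measure.restrict_univ] at this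
  rw [this]
  convert measure_empty (μ := P) using 2
  ext ω; simp [hZL ω]

lemma aemeasurable_eEnt_condDistrib (hZ : Measurable Z) (hY : Measurable Y) {L : Set α}
    (hLc : L.Countable) (hZL : ∀ ω, Z ω ∈ L) :
    AEMeasurable (fun y => eEnt (condDistrib Z Y P y)) (P.map Y) := by
  have : Countable L := hLc
  refine ⟨fun y => ∑' a : L,
    ENNReal.ofReal (Real.negMulLog (condDistrib Z Y P y {(a : α)}).toReal), ?_, ?_⟩
  · refine Measurable.tsum fun a => ENNReal.measurable_ofReal.comp ?_
    exact Real.continuous_negMulLog.measurable.comp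
      (Kernel.measurable_coe _ (measurableSet_singleton _)).ennreal_toReal
  · filter_upwards [condDistrib_compl_eq_zero P hZ hY hLc hZL] with y hy
    exact eEnt_eq_tsum_subtype _ hy

/-- The conditional entropy as a lower integral; finiteness excludes the junk value of the
Bochner integral. -/
lemma condEnt_eq_toReal (hZ : Measurable Z) (hY : Measurable Y) {L : Set α}
    (hLc : L.Countable) (hZL : ∀ ω, Z ω ∈ L)
    (hfin : ∫⁻ y, eEnt (condDistrib Z Y P y) ∂(P.map Y) ≠ ∞) :
    condEnt P Z Y = (∫⁻ y, eEnt (condDistrib Z Y P y) ∂(P.map Y)).toReal := by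
  unfold condEnt
  simp_rw [mEnt_eq_toReal]
  have hm := aemeasurable_eEnt_condDistrib P hZ hY hLc hZL
  exact integral_toReal hm (ae_lt_top' hm hfin)

/-- Gibbs' inequality with a comparison weight `exp (-φ y ·)` that may depend on the condition,
averaged over the condition. -/
lemma lintegral_eEnt_le (hZ : Measurable Z) (hY : Measurable Y) {L : Set α}
    (hLc : L.Countable) (hZL : ∀ ω, Z ω ∈ L) (φ : β → α → ℝ)
    (hφm : Measurable (Function.uncurry φ)) (hφ : ∀ y a, 0 ≤ φ y a) (K : ℝ≥0∞)
    (hK : ∀ y, ∑' a : L, ENNReal.ofReal (Real.exp (-φ y a)) ≤ K) :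
    ∫⁻ y, eEnt (condDistrib Z Y P y) ∂(P.map Y) ≤
      ∫⁻ ω, ENNReal.ofReal (φ (Y ω) (Z ω)) ∂P + K := by
  have : IsProbabilityMeasure (P.map Y) := Measure.isProbabilityMeasure_map hY.aemeasurable
  have hm : Measurable fun x : β × α => ENNReal.ofReal (φ x.1 x.2) :=
    ENNReal.measurable_ofReal.comp hφm
  calc _ ≤ ∫⁻ y, (∫⁻ a, ENNReal.ofReal (φ y a) ∂(condDistrib Z Y P y) + K) ∂(P.map Y) := by
        refine lintegral_mono_ae ?_
        filter_upwards [condDistrib_compl_eq_zero P hZ hY hLc hZL] with y hy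
        refine (eEnt_le_gibbs _ hLc hy (φ y) (hφ y)).trans ?_
        gcongr
        exact hK y
    _ = _ := by
        rw [lintegral_add_right _ measurable_const, lintegral_const, measure_univ, mul_one]
        congr 1
        rw [← Measure.lintegral_compProd (f := fun x : β × α => ENNReal.ofReal (φ x.1 x.2)) hm,
          compProd_map_condDistrib hZ.aemeasurable, lintegral_map hm (hY.prodMk hZ)]

/-- Lower bound for conditional entropy. If on an event `A` each value of `Z` has conditional
probability at most `c`, then by Markov's inequality the conditional probability of the value taken
exceeds `exp (-ℓ)` only on a part of `A` of probability at most `c * exp ℓ`; on the rest of `A` the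
value taken contributes at least `ℓ` to the entropy. -/
lemma le_lintegral_eEnt (hZ : Measurable Z) (hY : Measurable Y) {L : Set α}
    (hLc : L.Countable) (hZL : ∀ ω, Z ω ∈ L) {A : Set Ω} (hA : MeasurableSet A) (c : ℝ≥0∞)
    (hc : ∀ a ∈ L, ∀ E : Set β, MeasurableSet E →
      P (A ∩ Z ⁻¹' {a} ∩ Y ⁻¹' E) ≤ c * P (Y ⁻¹' E)) {ℓ : ℝ} (hℓ : 0 ≤ ℓ) :
    ENNReal.ofReal ℓ * P A ≤ ∫⁻ y, eEnt (condDistrib Z Y P y) ∂(P.map Y) +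
      ENNReal.ofReal ℓ * (c * ENNReal.ofReal (Real.exp ℓ)) := by
  have : Countable L := hLc
  set κ := condDistrib Z Y P with hκ
  have hκm : ∀ a, Measurable fun y => κ y {a} := fun a =>
    Kernel.measurable_coe _ (measurableSet_singleton _)
  have hZa : ∀ a, MeasurableSet (Z ⁻¹' {a}) := fun a => hZ (measurableSet_singleton _)
  have hset : ∀ a, ∀ E : Set β, MeasurableSet E →
      ∫⁻ y in E, κ y {a} ∂(P.map Y) = P (Z ⁻¹' {a} ∩ Y ⁻¹' E) := by
    intro a E hE
    rw [Measure.restrict_map hY hE, lintegral_map (hκm a) hY,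
      setLIntegral_preimage_condDistrib hY hZ.aemeasurable (measurableSet_singleton _) hE,
      inter_comm]
  have key : ∀ a ∈ L, ENNReal.ofReal ℓ * P (A ∩ Z ⁻¹' {a}) ≤
      ∫⁻ y, ENNReal.ofReal (Real.negMulLog (κ y {a}).toReal) ∂(P.map Y) +
      ENNReal.ofReal ℓ * (c * ENNReal.ofReal (Real.exp ℓ)) * P (Z ⁻¹' {a}) := by
    intro a ha
    set E : Set β := {y | ENNReal.ofReal (Real.exp (-ℓ)) ≤ κ y {a}} with hE
    have hEm : MeasurableSet E := measurableSet_le measurable_const (hκm a)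
    have h1 : P (A ∩ Z ⁻¹' {a}) ≤ P (Z ⁻¹' {a} ∩ Y ⁻¹' Eᶜ) + P (A ∩ Z ⁻¹' {a} ∩ Y ⁻¹' E) := by
      refine (measure_mono ?_).trans (measure_union_le _ _)
      rintro ω ⟨h, h'⟩
      by_cases hω : Y ω ∈ E
      · exact Or.inr ⟨⟨h, h'⟩, hω⟩
      · exact Or.inl ⟨h', hω⟩
    have h2 : P (A ∩ Z ⁻¹' {a} ∩ Y ⁻¹' E) ≤ c * ENNReal.ofReal (Real.exp ℓ) * P (Z ⁻¹' {a}) := by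
      refine (hc a ha E hEm).trans ?_
      rw [mul_assoc]
      gcongr
      have hmk := mul_meas_ge_le_lintegral (μ := P.map Y) (hκm a) (ENNReal.ofReal (Real.exp (-ℓ)))
      have hu := hset a univ MeasurableSet.univ
      rw [Measure.restrict_univ, preimage_univ, inter_univ] at hu
      rw [hu] at hmk
      rw [← Measure.map_apply hY hEm]
      calc P.map Y E = ENNReal.ofReal (Real.exp ℓ) *
            (ENNReal.ofReal (Real.exp (-ℓ)) * P.map Y E) := by
            rw [← mul_assoc, ← ENNReal.ofReal_mul (Real.exp_pos _).le, ← Real.exp_add]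
            simp
        _ ≤ _ := by gcongr
    have h3 : ENNReal.ofReal ℓ * P (Z ⁻¹' {a} ∩ Y ⁻¹' Eᶜ) ≤
        ∫⁻ y, ENNReal.ofReal (Real.negMulLog (κ y {a}).toReal) ∂(P.map Y) := by
      rw [← hset a _ hEm.compl, ← lintegral_const_mul _ (hκm a)]
      refine (setLIntegral_mono' hEm.compl ?_).trans (setLIntegral_le_lintegral _ _)
      intro y hy
      have hfin : κ y {a} ≠ ∞ := measure_ne_top _ _
      have hy' : ¬ ENNReal.ofReal (Real.exp (-ℓ)) ≤ κ y {a} := hy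
      rw [← ENNReal.ofReal_toReal hfin, ENNReal.toReal_ofReal ENNReal.toReal_nonneg,
        ← ENNReal.ofReal_mul hℓ]
      apply ENNReal.ofReal_le_ofReal
      set p := (κ y {a}).toReal with hp
      have hp0 : 0 ≤ p := ENNReal.toReal_nonneg
      have hple : p ≤ Real.exp (-ℓ) :=
        ENNReal.toReal_le_of_le_ofReal (Real.exp_pos _).le (not_le.1 hy').le
      rcases hp0.eq_or_lt with h0 | h0
      · simp [← h0]
      · have := Real.log_le_log h0 hple
        rw [Real.log_exp] at this
        unfold Real.negMulLog
        nlinarith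
    calc _ ≤ ENNReal.ofReal ℓ * (P (Z ⁻¹' {a} ∩ Y ⁻¹' Eᶜ) + P (A ∩ Z ⁻¹' {a} ∩ Y ⁻¹' E)) := by
          gcongr
      _ ≤ _ := by
          rw [mul_add]
          refine add_le_add h3 ?_
          rw [mul_assoc]
          gcongr
  have hsum : ∀ B : Set Ω, MeasurableSet B → ∑' a : L, P (B ∩ Z ⁻¹' {(a : α)}) = P B := by
    intro B hB
    rw [← measure_iUnion]
    · congr 1
      ext ω
      simp [hZL ω]
    · intro a b hab
      refine Disjoint.mono inter_subset_right inter_subset_right ?_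
      exact Disjoint.preimage _ (by simpa using fun h => hab (Subtype.ext h))
    · exact fun a => hB.inter (hZa a)
  have hu := hsum univ MeasurableSet.univ
  simp only [univ_inter, measure_univ] at hu
  calc _ = ∑' a : L, ENNReal.ofReal ℓ * P (A ∩ Z ⁻¹' {(a : α)}) := by
        rw [ENNReal.tsum_mul_left, hsum A hA]
    _ ≤ ∑' a : L, (∫⁻ y, ENNReal.ofReal (Real.negMulLog (κ y {(a : α)}).toReal) ∂(P.map Y) +
          ENNReal.ofReal ℓ * (c * ENNReal.ofReal (Real.exp ℓ)) * P (Z ⁻¹' {(a : α)})) :=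
        ENNReal.tsum_le_tsum fun a => key a a.2
    _ = _ := by
        rw [ENNReal.tsum_add, ENNReal.tsum_mul_left, hu, mul_one, ← lintegral_tsum]
        · congr 1
          refine lintegral_congr_ae ?_
          filter_upwards [condDistrib_compl_eq_zero P hZ hY hLc hZL] with y hy
          exact (eEnt_eq_tsum_subtype _ hy).symm
        · intro a
          exact (ENNReal.measurable_ofReal.comp
            (Real.continuous_negMulLog.measurable.comp (hκm a).ennreal_toReal)).aemeasurable

/-- Conditioning on a constant leaves the entropy unchanged. -/
lemma condEnt_of_subsingleton [Subsingleton β] (hZ : Measurable Z) (hY : Measurable Y) :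
    condEnt P Z Y = mEnt (P.map Z) := by
  have hprob : IsProbabilityMeasure (P.map Y) := Measure.isProbabilityMeasure_map hY.aemeasurable
  have h : ∀ y, condDistrib Z Y P y = P.map Z := by
    intro y
    ext s hs
    have := setLIntegral_preimage_condDistrib (μ := P) hY hZ.aemeasurable hs MeasurableSet.univ
    rw [preimage_univ, Measure.restrict_univ, univ_inter] at this
    rw [Measure.map_apply hZ hs, ← this]
    simp_rw [fun ω => Subsingleton.elim (Y ω) y]
    simp
  unfold condEnt
  simp_rw [h]
  simp

end Conditional

/-! ### Measure-theoretic tools -/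

/-- If the law `η` of a pair is absolutely continuous with respect to a product measure, then off a
set of small probability it is bounded by a multiple of the product of its first marginal with the
second factor of that product. -/
lemma exists_dominated_set {α β : Type*} [MeasurableSpace α] [MeasurableSpace β]
    (η : Measure (α × β)) [IsProbabilityMeasure η] (μ : Measure α) (lam : Measure β)
    [SigmaFinite μ] [SigmaFinite lam] (h : η ≪ μ.prod lam) {ε : ℝ≥0∞} (hε : 0 < ε) :
    ∃ (A : Set (α × β)) (B : ℕ), MeasurableSet A ∧ 1 ≤ η A + ε ∧
      ∀ S, MeasurableSet S → η (A ∩ S) ≤ B * (η.fst.prod lam) S := by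
  have hac : η ≪ η.fst.prod lam := by
    refine Measure.AbsolutelyContinuous.mk fun S hS hS0 => ?_
    have hslice : Measurable fun y => lam (Prod.mk y ⁻¹' S) := measurable_measure_prodMk_left hS
    set E : Set α := {y | lam (Prod.mk y ⁻¹' S) ≠ 0} with hE
    have hEm : MeasurableSet E := (hslice (measurableSet_singleton 0)).compl
    rw [Measure.prod_apply hS, lintegral_eq_zero_iff hslice] at hS0
    have hE0 : η (Prod.fst ⁻¹' E) = 0 := by
      rw [← Measure.fst_apply hEm]; exact hS0
    have hS1 : η (S ∩ Prod.fst ⁻¹' Eᶜ) = 0 := by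
      apply h
      rw [Measure.prod_apply (hS.inter (measurable_fst hEm.compl)), lintegral_eq_zero_iff
        (measurable_measure_prodMk_left (hS.inter (measurable_fst hEm.compl)))]
      refine Eventually.of_forall fun y => ?_
      by_cases hy : y ∈ E
      · refine (measure_mono_null (t := ∅) ?_ measure_empty)
        rintro t ⟨_, ht⟩
        exact ht hy
      · have hy' : lam (Prod.mk y ⁻¹' S) = 0 := not_not.1 hy
        exact measure_mono_null (fun t ht => ht.1) hy'
    refine measure_mono_null (t := Prod.fst ⁻¹' E ∪ (S ∩ Prod.fst ⁻¹' Eᶜ)) ?_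
      (measure_union_null hE0 hS1)
    intro x hx
    by_cases hxE : x.1 ∈ E
    · exact Or.inl hxE
    · exact Or.inr ⟨hx, hxE⟩
  set ρ := η.fst.prod lam
  set f := η.rnDeriv ρ with hf
  have hfm : Measurable f := Measure.measurable_rnDeriv _ _
  have hηf : η = ρ.withDensity f := (Measure.withDensity_rnDeriv_eq _ _ hac).symm
  have hAm : ∀ n : ℕ, MeasurableSet {x | f x ≤ n} := fun n => measurableSet_le hfm measurable_const
  have hlim : Tendsto (fun n : ℕ => η {x | f x ≤ n}) atTop (nhds (η (⋃ n : ℕ, {x | f x ≤ n}))) :=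
    tendsto_measure_iUnion_atTop fun m n hmn x hx =>
      (show f x ≤ m from hx).trans (by exact_mod_cast hmn)
  have hU : η (⋃ n : ℕ, {x | f x ≤ n}) = 1 := by
    rw [← prob_compl_eq_zero_iff (MeasurableSet.iUnion hAm)]
    apply hac
    refine measure_mono_null ?_ (ae_iff.1 (Measure.rnDeriv_lt_top η ρ))
    intro x hx hlt
    apply hx
    obtain ⟨n, hn⟩ := ENNReal.exists_nat_gt hlt.ne
    exact mem_iUnion.2 ⟨n, hn.le⟩
  rw [hU] at hlim
  obtain ⟨n, hn⟩ : ∃ n : ℕ, 1 ≤ η {x | f x ≤ n} + ε := by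
    have hlim' := hlim.add_const ε
    obtain ⟨n, hn⟩ := ((tendsto_order.1 hlim').1 1
      (ENNReal.lt_add_right ENNReal.one_ne_top hε.ne')).exists
    exact ⟨n, hn.le⟩
  refine ⟨_, n, hAm n, hn, fun S hS => ?_⟩
  calc η ({x | f x ≤ n} ∩ S) = ∫⁻ x in {x | f x ≤ n} ∩ S, f x ∂ρ := by
        conv_lhs => rw [hηf]
        exact withDensity_apply _ ((hAm n).inter hS)
    _ ≤ ∫⁻ x in {x | f x ≤ n} ∩ S, n ∂ρ :=
        setLIntegral_mono' ((hAm n).inter hS) fun x hx => hx.1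
    _ = n * ρ ({x | f x ≤ n} ∩ S) := by rw [setLIntegral_const]
    _ ≤ n * ρ S := by gcongr; exact inter_subset_right

/-- The two-sided exponential weight of rate `b` centred at `c` is normalized to total mass `2`. -/
lemma integral_two_sided_exp {b : ℝ} (hb : 0 < b) (c : ℝ) :
    ∫ s : ℝ, b * Real.exp (-(b * |s - c|)) = 2 := by
  rw [integral_sub_right_eq_self (fun s => b * Real.exp (-(b * |s|))) c,
    integral_comp_abs (f := fun s => b * Real.exp (-(b * s))), integral_const_mul]
  have h := integral_exp_mul_Ioi (a := -b) (by linarith) 0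
  simp only [neg_mul, mul_zero, Real.exp_zero] at h
  rw [h]
  field_simp

lemma lintegral_prod_exp {N : ℕ} (b c : Fin N → ℝ) (hb : ∀ i, 0 < b i) :
    ∫⁻ u : Fin N → ℝ, ENNReal.ofReal (∏ i, (b i * Real.exp (-(b i * |u i - c i|)))) = 2 ^ N := by
  have hi : Integrable (fun u : Fin N → ℝ => ∏ i, (b i * Real.exp (-(b i * |u i - c i|)))) := by
    refine Integrable.fintype_prod (f := fun i s => b i * Real.exp (-(b i * |s - c i|)))
      fun i => ?_
    refine Integrable.of_integral_ne_zero ?_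
    rw [integral_two_sided_exp (hb i)]
    norm_num
  rw [← ofReal_integral_eq_lintegral_ofReal hi
    (Eventually.of_forall fun u => Finset.prod_nonneg fun i _ =>
      mul_nonneg (hb i).le (Real.exp_pos _).le),
    integral_fintype_prod_volume_eq_prod (fun i s => b i * Real.exp (-(b i * |s - c i|)))]
  simp_rw [integral_two_sided_exp (hb _)]
  simp [ENNReal.ofReal_pow]

/-! ### Quantization cells and orthogonal maps -/

/-- The componentwise quantization of a vector. -/
noncomputable def quant {N : ℕ} (k : ℕ) (x : Fin N → ℝ) : Fin N → ℝ := fun i => qz k (x i)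

/-- The lattice `(1/k) ℤ^N` of quantized vectors. -/
def lat (N k : ℕ) : Set (Fin N → ℝ) := range fun (z : Fin N → ℤ) i => (z i : ℝ) / k

lemma countable_lat (N k : ℕ) : (lat N k).Countable := countable_range _

lemma quant_mem_lat {N : ℕ} (k : ℕ) (x : Fin N → ℝ) : quant k x ∈ lat N k :=
  ⟨fun i => ⌊(k : ℝ) * x i⌋, rfl⟩

lemma measurable_quant {N : ℕ} (k : ℕ) : Measurable (quant k : (Fin N → ℝ) → Fin N → ℝ) := by
  refine measurable_pi_lambda _ fun i => ?_
  have h : Measurable fun x : Fin N → ℝ => ((⌊(k : ℝ) * x i⌋ : ℤ) : ℝ) :=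
    measurable_from_top.comp (Int.measurable_floor.comp (by fun_prop))
  exact h.div_const _

lemma abs_sub_qz_le {k : ℕ} (hk : 0 < k) (s : ℝ) : |s - qz k s| ≤ 1 / k := by
  have hk' : (0 : ℝ) < k := by exact_mod_cast hk
  unfold qz
  have h1 := Int.floor_le ((k : ℝ) * s)
  have h2 := Int.lt_floor_add_one ((k : ℝ) * s)
  have h3 : s - ⌊(k : ℝ) * s⌋ / k = (k * s - ⌊(k : ℝ) * s⌋) / k := by field_simp
  rw [h3, abs_div, abs_of_pos hk', abs_of_nonneg (by linarith)]
  gcongr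
  linarith

/-- A quantization cell has volume at least `k⁻¹ ^ N`. -/
lemma le_volume_cell {N k : ℕ} (hk : 0 < k) {a : Fin N → ℝ} (ha : a ∈ lat N k) :
    ENNReal.ofReal (((k : ℝ)⁻¹) ^ N) ≤ volume ((quant k : (Fin N → ℝ) → _) ⁻¹' {a}) := by
  have hk' : (0 : ℝ) < k := by exact_mod_cast hk
  obtain ⟨z, rfl⟩ := ha
  have hsub : (univ.pi fun i => Ico ((z i : ℝ) / k) ((z i : ℝ) / k + (k : ℝ)⁻¹)) ⊆
      (quant k : (Fin N → ℝ) → _) ⁻¹' {fun i => (z i : ℝ) / k} := by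
    intro x hx
    ext i
    obtain ⟨h1, h2⟩ := hx i (mem_univ i)
    have : ⌊(k : ℝ) * x i⌋ = z i := by
      rw [Int.floor_eq_iff]
      constructor
      · rw [div_le_iff₀ hk'] at h1; linarith
      · have := mul_lt_mul_of_pos_left h2 hk'
        rw [mul_add, mul_inv_cancel₀ hk'.ne', mul_div_cancel₀ _ hk'.ne'] at this
        exact this
    simp [quant, qz, this]
  refine le_trans ?_ (measure_mono hsub)
  rw [volume_pi_pi]
  rw [ENNReal.ofReal_pow (inv_nonneg.2 hk'.le)]
  simp

/-- The sum of the absolute values of the entries, a Lipschitz constant of `x ↦ Vx` from the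
supremum norm to each coordinate. -/
noncomputable def entrySum {N : ℕ} (V : Matrix (Fin N) (Fin N) ℝ) : ℝ := ∑ i, ∑ j, |V i j|

lemma entrySum_nonneg {N : ℕ} (V : Matrix (Fin N) (Fin N) ℝ) : 0 ≤ entrySum V :=
  Finset.sum_nonneg fun _ _ => Finset.sum_nonneg fun _ _ => abs_nonneg _

lemma abs_mulVec_sub_le {N : ℕ} (V : Matrix (Fin N) (Fin N) ℝ) {x y : Fin N → ℝ} {r : ℝ}
    (h : ∀ i, |x i - y i| ≤ r) (i : Fin N) :
    |V.mulVec x i - V.mulVec y i| ≤ entrySum V * r := by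
  have hr : 0 ≤ r := (abs_nonneg _).trans (h i)
  rw [← Pi.sub_apply, ← Matrix.mulVec_sub]
  simp only [Matrix.mulVec, dotProduct, Pi.sub_apply]
  calc |∑ j, V i j * (x j - y j)| ≤ ∑ j, |V i j * (x j - y j)| := Finset.abs_sum_le_sum_abs _ _
    _ ≤ ∑ j, |V i j| * r := by
        refine Finset.sum_le_sum fun j _ => ?_
        rw [abs_mul]
        exact mul_le_mul_of_nonneg_left (h j) (abs_nonneg _)
    _ = (∑ j, |V i j|) * r := by rw [Finset.sum_mul]
    _ ≤ entrySum V * r := by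
        refine mul_le_mul_of_nonneg_right ?_ hr
        exact Finset.single_le_sum (f := fun i => ∑ j, |V i j|)
          (fun _ _ => Finset.sum_nonneg fun _ _ => abs_nonneg _) (Finset.mem_univ i)

lemma measurable_mulVec {N : ℕ} (V : Matrix (Fin N) (Fin N) ℝ) :
    Measurable fun x : Fin N → ℝ => V.mulVec x := by
  have : Continuous fun x : Fin N → ℝ => V.mulVec x := by fun_prop
  exact this.measurable

lemma measurePreserving_mulVec {N : ℕ} {V : Matrix (Fin N) (Fin N) ℝ}
    (hV : V * V.transpose = 1) : MeasurePreserving (fun x : Fin N → ℝ => V.mulVec x) := by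
  refine ⟨measurable_mulVec V, ?_⟩
  have hd : V.det * V.det = 1 := by
    have := congrArg Matrix.det hV
    rwa [Matrix.det_mul, Matrix.det_transpose, Matrix.det_one] at this
  have hd' : |V.det| = 1 := by
    rcases mul_self_eq_one_iff.1 hd with h | h <;> simp [h]
  have h0 : V.det ≠ 0 := fun h => by simp [h] at hd
  have := Real.map_matrix_volume_pi_eq_smul_volume_pi h0
  rw [abs_inv, hd', inv_one, ENNReal.ofReal_one, one_smul] at this
  exact this

/-! ### Upper bound -/

/-- The comparison weights of Gibbs' inequality have bounded mass. Each weight is the product of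
two-sided exponential densities of rates `b i ≤ k`, evaluated at the image of the lattice point
and multiplied by `k⁻¹ ^ N`. Such a density varies at most by a constant factor on a cell, so that
the sum compares with an integral over the whole space. -/
lemma tsum_lat_le {N k : ℕ} (hk : 0 < k) {V : Matrix (Fin N) (Fin N) ℝ}
    (hV : V * V.transpose = 1) (b c : Fin N → ℝ) (hb : ∀ i, 0 < b i) (hbk : ∀ i, b i ≤ k) :
    ∑' a : lat N k, ENNReal.ofReal (Real.exp (-(N * Real.log k - ∑ i, Real.log (b i) +
      ∑ i, b i * |V.mulVec a i - c i|))) ≤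
      ENNReal.ofReal (Real.exp (N * entrySum V)) * 2 ^ N := by
  have hk' : (0 : ℝ) < k := by exact_mod_cast hk
  have : Countable (lat N k) := countable_lat N k
  set g : (Fin N → ℝ) → ℝ := fun u => ∏ i, (b i * Real.exp (-(b i * |u i - c i|))) with hg
  have hgexp : ∀ u, g u = Real.exp (∑ i, Real.log (b i) - ∑ i, b i * |u i - c i|) := by
    intro u
    rw [← Finset.sum_sub_distrib, Real.exp_sum]
    refine Finset.prod_congr rfl fun i _ => ?_
    rw [sub_eq_add_neg (Real.log (b i)), Real.exp_add, Real.exp_log (hb i)]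
  have hgm : Measurable fun u => ENNReal.ofReal (g u) := by
    refine ENNReal.measurable_ofReal.comp ?_
    have : Continuous g := by fun_prop
    exact this.measurable
  set cell : lat N k → Set (Fin N → ℝ) := fun a => quant k ⁻¹' {(a : Fin N → ℝ)} with hcell
  have hcm : ∀ a, MeasurableSet (cell a) := fun a =>
    measurable_quant k (measurableSet_singleton _)
  have hterm : ∀ a : lat N k, ENNReal.ofReal (Real.exp (-(N * Real.log k - ∑ i, Real.log (b i) +
      ∑ i, b i * |V.mulVec a i - c i|))) ≤
      ∫⁻ x in cell a, ENNReal.ofReal (Real.exp (N * entrySum V)) *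
        ENNReal.ofReal (g (V.mulVec x)) := by
    intro a
    have h1 : Real.exp (-(N * Real.log k - ∑ i, Real.log (b i) +
      ∑ i, b i * |V.mulVec a i - c i|)) = g (V.mulVec a) * ((k : ℝ)⁻¹) ^ N := by
      have : ((k : ℝ)⁻¹) ^ N = Real.exp (-(N * Real.log k)) := by
        rw [Real.exp_neg, mul_comm, Real.exp_mul, Real.exp_log hk', Real.rpow_natCast, inv_pow]
      rw [hgexp, this, ← Real.exp_add]
      congr 1
      ring
    have hgnn : 0 ≤ g (V.mulVec a) := by rw [hgexp]; exact (Real.exp_pos _).le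
    rw [h1, ENNReal.ofReal_mul hgnn]
    calc _ ≤ ENNReal.ofReal (g (V.mulVec a)) * volume (cell a) := by
          gcongr
          exact le_volume_cell hk a.2
      _ = ∫⁻ x in cell a, ENNReal.ofReal (g (V.mulVec a)) := by rw [setLIntegral_const]
      _ ≤ _ := by
          refine setLIntegral_mono' (hcm a) fun x hx => ?_
          rw [← ENNReal.ofReal_mul (Real.exp_pos _).le]
          apply ENNReal.ofReal_le_ofReal
          rw [hgexp, hgexp, ← Real.exp_add]
          apply Real.exp_le_exp.2
          have hxa : quant k x = a := hx
          have hi : ∀ i, b i * |V.mulVec x i - c i| ≤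
              entrySum V + b i * |V.mulVec a i - c i| := by
            intro i
            have h2 := abs_mulVec_sub_le V (x := x) (y := a) (r := 1 / k)
              (fun j => by rw [← hxa]; exact abs_sub_qz_le hk _) i
            have h3 : b i * |V.mulVec x i - V.mulVec a i| ≤ entrySum V := by
              calc _ ≤ k * (entrySum V * (1 / k)) :=
                    mul_le_mul (hbk i) h2 (abs_nonneg _) hk'.le
                _ = entrySum V := by field_simp
            have h4 := mul_le_mul_of_nonneg_left
              (abs_sub_le (V.mulVec x i) (V.mulVec a i) (c i)) (hb i).le
            linarith
          have hs := Finset.sum_le_sum fun i (_ : i ∈ Finset.univ) => hi i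
          rw [Finset.sum_add_distrib, Finset.sum_const, Finset.card_univ, Fintype.card_fin,
            nsmul_eq_mul] at hs
          linarith
  calc _ ≤ ∑' a : lat N k, ∫⁻ x in cell a, ENNReal.ofReal (Real.exp (N * entrySum V)) *
        ENNReal.ofReal (g (V.mulVec x)) := ENNReal.tsum_le_tsum hterm
    _ = ∫⁻ x in ⋃ a, cell a, ENNReal.ofReal (Real.exp (N * entrySum V)) *
        ENNReal.ofReal (g (V.mulVec x)) := by
        rw [lintegral_iUnion hcm]
        intro a a' haa
        exact Disjoint.preimage _ (by simpa using fun h => haa (Subtype.ext h))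
    _ ≤ ∫⁻ x, ENNReal.ofReal (Real.exp (N * entrySum V)) * ENNReal.ofReal (g (V.mulVec x)) :=
        setLIntegral_le_lintegral _ _
    _ = _ := by
        have hmp := measurePreserving_mulVec hV
        rw [lintegral_const_mul' _ _ ENNReal.ofReal_ne_top,
          hmp.lintegral_comp hgm, lintegral_prod_exp b c hb]

/-- Entropy upper bound `(N - M) * log k + O(1)`, with `O(1)` independent of `k`. The logarithm of
the comparison weights is controlled by the first absolute moments of the coordinates. -/
lemma lintegral_eEnt_quant_le {Ω : Type*} [MeasurableSpace Ω] (P : Measure Ω)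
    [IsProbabilityMeasure P] {N M : ℕ} (hMN : M ≤ N) {X : Ω → Fin N → ℝ} (hX : Measurable X)
    (hint : ∀ i, Integrable (fun ω => X ω i) P) {V : Matrix (Fin N) (Fin N) ℝ}
    (hV : V * V.transpose = 1) :
    ∃ K : ℝ≥0∞, K ≠ ∞ ∧ ∀ k : ℕ, 0 < k →
      ∫⁻ y, eEnt (condDistrib (fun ω => quant k (X ω))
        (fun ω (i : Fin M) => V.mulVec (X ω) (Fin.castLE hMN i)) P y)
          ∂(P.map fun ω (i : Fin M) => V.mulVec (X ω) (Fin.castLE hMN i)) ≤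
      ENNReal.ofReal (((N : ℝ) - M) * Real.log k) + K := by
  have hUint : Integrable (fun ω => ∑ i, (entrySum V + |V.mulVec (X ω) i|)) P := by
    refine integrable_finsetSum _ fun i _ => (integrable_const _).add (Integrable.abs ?_)
    simp only [Matrix.mulVec, dotProduct]
    exact integrable_finsetSum _ fun j _ => (hint j).const_mul _
  refine ⟨∫⁻ ω, ENNReal.ofReal (∑ i, (entrySum V + |V.mulVec (X ω) i|)) ∂P +
    ENNReal.ofReal (Real.exp (N * entrySum V)) * 2 ^ N, ?_, fun k hk => ?_⟩
  · refine ENNReal.add_ne_top.2 ⟨?_, ENNReal.mul_ne_top ENNReal.ofReal_ne_top (by simp)⟩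
    exact hUint.lintegral_lt_top.ne
  have hk1 : (1 : ℝ) ≤ k := by exact_mod_cast hk
  have hk' : (0 : ℝ) < k := by linarith
  have hV' := measurable_mulVec V
  -- Rate `k` in the observed coordinates, where the law given `y` sits at `y`, and rate `1` in
  -- the remaining ones.
  set b : Fin N → ℝ := fun i => if i.val < M then (k : ℝ) else 1 with hb
  set c : (Fin M → ℝ) → Fin N → ℝ := fun y i => if h : i.val < M then y ⟨i, h⟩ else 0 with hc
  have hb0 : ∀ i, 0 < b i := by intro i; simp only [hb]; split_ifs <;> linarith
  have hbk : ∀ i, b i ≤ k := by intro i; simp only [hb]; split_ifs <;> linarith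
  have hsumb : ∑ i, Real.log (b i) = M * Real.log k := by
    have h1 : ∀ i : Fin N, Real.log (b i) = if i.val < M then Real.log k else 0 := by
      intro i; simp only [hb]; split_ifs <;> simp
    simp_rw [h1]
    rw [Fin.sum_univ_eq_sum_range (fun i => if i < M then Real.log k else 0) N, ← Finset.sum_filter,
      Finset.sum_const, nsmul_eq_mul]
    congr 2
    have : (Finset.range N).filter (· < M) = Finset.range M := by
      ext i; simp; omega
    rw [this, Finset.card_range]
  have hcm : ∀ i, Measurable fun y => c y i := by
    intro i
    simp only [hc]
    split_ifs
    · exact measurable_pi_apply _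
    · exact measurable_const
  have hq : Measurable fun ω => quant k (X ω) := (measurable_quant k).comp hX
  have hY : Measurable fun ω (i : Fin M) => V.mulVec (X ω) (Fin.castLE hMN i) :=
    measurable_pi_lambda _ fun i => (measurable_pi_apply _).comp (hV'.comp hX)
  refine (lintegral_eEnt_le P hq hY (countable_lat N k) (fun ω => quant_mem_lat k (X ω))
    (fun y a => N * Real.log k - ∑ i, Real.log (b i) + ∑ i, b i * |V.mulVec a i - c y i|)
    ?_ ?_ _ (fun y => tsum_lat_le hk hV b (c y) hb0 hbk)).trans ?_
  · refine measurable_const.add (Finset.measurable_sum _ fun i _ => ?_)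
    refine measurable_const.mul ?_
    have h1 : Measurable fun x : (Fin M → ℝ) × (Fin N → ℝ) => V.mulVec x.2 i - c x.1 i :=
      ((measurable_pi_apply i).comp (hV'.comp measurable_snd)).sub ((hcm i).comp measurable_fst)
    exact continuous_abs.measurable.comp h1
  · intro y a
    rw [hsumb, ← sub_mul]
    have h1 : (0 : ℝ) ≤ (N : ℝ) - M := by
      have : (M : ℝ) ≤ N := by exact_mod_cast hMN
      linarith
    have h2 := Real.log_nonneg hk1
    have h3 : 0 ≤ ∑ i, b i * |V.mulVec a i - c y i| :=
      Finset.sum_nonneg fun i _ => mul_nonneg (hb0 i).le (abs_nonneg _)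
    positivity
  · rw [← add_assoc]
    gcongr
    have hpt : ∀ ω, N * Real.log k - ∑ i, Real.log (b i) + ∑ i, b i *
        |V.mulVec (quant k (X ω)) i - c (fun i => V.mulVec (X ω) (Fin.castLE hMN i)) i| ≤
        ((N : ℝ) - M) * Real.log k + ∑ i, (entrySum V + |V.mulVec (X ω) i|) := by
      intro ω
      rw [hsumb, ← sub_mul]
      gcongr with i _
      have h1 := abs_mulVec_sub_le V (x := quant k (X ω)) (y := X ω) (r := 1 / k)
        (fun j => by rw [abs_sub_comm]; exact abs_sub_qz_le hk _) i
      have h0 := entrySum_nonneg V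
      have hU0 := abs_nonneg (V.mulVec (X ω) i)
      simp only [hb, hc]
      split_ifs with h
      · have h2 := mul_le_mul_of_nonneg_left h1 hk'.le
        have h3 : (k : ℝ) * (entrySum V * (1 / k)) = entrySum V := by field_simp
        rw [h3] at h2
        refine (le_trans (le_of_eq ?_) h2).trans (by linarith)
        rfl
      · have h2 : entrySum V * (1 / k) ≤ entrySum V :=
          mul_le_of_le_one_right h0 ((div_le_one hk').2 hk1)
        have h3 := abs_sub_abs_le_abs_sub (V.mulVec (quant k (X ω)) i) (V.mulVec (X ω) i)
        rw [one_mul, sub_zero]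
        linarith
    calc _ ≤ ∫⁻ ω, (ENNReal.ofReal (((N : ℝ) - M) * Real.log k) +
          ENNReal.ofReal (∑ i, (entrySum V + |V.mulVec (X ω) i|))) ∂P :=
          lintegral_mono fun ω => (ENNReal.ofReal_le_ofReal (hpt ω)).trans ENNReal.ofReal_add_le
      _ = _ := by
          rw [lintegral_add_left measurable_const, lintegral_const, measure_univ, mul_one]

/-! ### Lower bound -/

/-- On an event of probability close to one, the conditional probability of a cell given the
observed coordinates is of order at most `k⁻¹ ^ (N - M)`: a fibre of the projection meets a cell
in a set contained in a cube with side of order `1 / k`. -/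
lemma exists_event_cell_le {Ω : Type*} [MeasurableSpace Ω] (P : Measure Ω)
    [IsProbabilityMeasure P] {N M : ℕ} (hMN : M ≤ N) {X : Ω → Fin N → ℝ} (hX : Measurable X)
    (hac : P.map X ≪ volume) {V : Matrix (Fin N) (Fin N) ℝ}
    (hV : V * V.transpose = 1) {ε : ℝ≥0∞} (hε : 0 < ε) :
    ∃ (A : Set Ω) (K : ℝ), 0 < K ∧ MeasurableSet A ∧ 1 ≤ P A + ε ∧ ∀ k : ℕ, 0 < k →
      ∀ a : Fin N → ℝ, ∀ E : Set (Fin M → ℝ), MeasurableSet E →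
      P (A ∩ (fun ω => quant k (X ω)) ⁻¹' {a} ∩
        (fun ω (i : Fin M) => V.mulVec (X ω) (Fin.castLE hMN i)) ⁻¹' E) ≤
      ENNReal.ofReal (K * ((k : ℝ)⁻¹) ^ (N - M)) *
        P ((fun ω (i : Fin M) => V.mulVec (X ω) (Fin.castLE hMN i)) ⁻¹' E) := by
  have hV2 : V.transpose * V = 1 := mul_eq_one_comm.1 hV
  have hmp := measurePreserving_mulVec hV
  set p : Fin N → Prop := fun i => i.val < M with hp
  set e := MeasurableEquiv.piEquivPiSubtypeProd (fun _ : Fin N => ℝ) p with he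
  have hemp : MeasurePreserving e := volume_preserving_piEquivPiSubtypeProd (fun _ => ℝ) p
  set T : Ω → ({i // p i} → ℝ) × ({i // ¬ p i} → ℝ) := fun ω => e (V.mulVec (X ω)) with hT
  have hTm : Measurable T := e.measurable.comp (hmp.measurable.comp hX)
  set η := P.map T with hη
  have hηp : IsProbabilityMeasure η := Measure.isProbabilityMeasure_map hTm.aemeasurable
  have hηac : η ≪ (volume : Measure ({i // p i} → ℝ)).prod
      (volume : Measure ({i // ¬ p i} → ℝ)) := by
    have h1 : η = (P.map X).map (fun x => e (V.mulVec x)) := by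
      exact (Measure.map_map (e.measurable.comp hmp.measurable) hX).symm
    have h2 : MeasurePreserving (fun x : Fin N → ℝ => e (V.mulVec x)) := hemp.comp hmp
    rw [h1]
    have h3 := hac.map h2.measurable
    rwa [h2.map_eq] at h3
  obtain ⟨A, B, hA, hA1, hAS⟩ := exists_dominated_set η _ _ hηac hε
  -- Two points of one cell differ by at most `2 / k` in each coordinate, so their images under `V`
  -- differ by at most `2 * entrySum V / k`; the fibre then lies in a cube of side `4 * R / k`.
  set R := entrySum V with hR
  have hR0 : 0 ≤ R := entrySum_nonneg V
  have hcard : Fintype.card {i : Fin N // ¬ p i} = N - M := by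
    rw [Fintype.card_subtype_compl, Fintype.card_fin]
    congr 1
    rw [Fintype.card_subtype]
    have := Fin.card_filter_val_lt (n := N) (m := M)
    simpa [hp, Nat.min_eq_right hMN] using this
  refine ⟨T ⁻¹' A, (B + 1) * (4 * R + 1) ^ (N - M), by positivity, hTm hA, ?_, ?_⟩
  · rwa [hη, Measure.map_apply hTm hA] at hA1
  intro k hk a E hE
  have hk' : (0 : ℝ) < k := by exact_mod_cast hk
  set r : ({i // p i} → ℝ) → (Fin M → ℝ) := fun y i => y ⟨Fin.castLE hMN i, i.2⟩ with hr
  have hrm : Measurable r := measurable_pi_lambda _ fun i => measurable_pi_apply _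
  have hrY : ∀ ω, r (T ω).1 = fun i : Fin M => V.mulVec (X ω) (Fin.castLE hMN i) := fun ω => rfl
  set f : ({i // p i} → ℝ) × ({i // ¬ p i} → ℝ) → (Fin N → ℝ) :=
    fun w => quant k (V.transpose.mulVec (e.symm w)) with hf
  have hfm : Measurable f :=
    (measurable_quant k).comp ((measurable_mulVec _).comp e.symm.measurable)
  have hfT : ∀ ω, f (T ω) = quant k (X ω) := by
    intro ω
    simp only [hf, hT, MeasurableEquiv.symm_apply_apply, Matrix.mulVec_mulVec, hV2,
      Matrix.one_mulVec]
  set S := f ⁻¹' {a} ∩ Prod.fst ⁻¹' (r ⁻¹' E) with hS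
  have hSm : MeasurableSet S :=
    (hfm (measurableSet_singleton a)).inter (measurable_fst (hrm hE))
  have h1 : P (T ⁻¹' A ∩ (fun ω => quant k (X ω)) ⁻¹' {a} ∩
        (fun ω (i : Fin M) => V.mulVec (X ω) (Fin.castLE hMN i)) ⁻¹' E) = η (A ∩ S) := by
    rw [hη, Measure.map_apply hTm (hA.inter hSm)]
    congr 1
    ext ω
    simp only [hS, mem_inter_iff, mem_preimage, mem_singleton_iff, hfT, hrY, and_assoc]
  have h2 : P ((fun ω (i : Fin M) => V.mulVec (X ω) (Fin.castLE hMN i)) ⁻¹' E) =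
      η.fst (r ⁻¹' E) := by
    rw [Measure.fst_apply (hrm hE), hη, Measure.map_apply hTm (measurable_fst (hrm hE))]
    rfl
  have hslice : ∀ y, (volume : Measure ({i // ¬ p i} → ℝ)) (Prod.mk y ⁻¹' S) ≤
      (r ⁻¹' E).indicator (fun _ => ENNReal.ofReal ((4 * R / k) ^ (N - M))) y := by
    intro y
    by_cases hy : y ∈ r ⁻¹' E
    · rw [indicator_of_mem hy]
      rcases (Prod.mk y ⁻¹' S).eq_empty_or_nonempty with h0 | ⟨t₀, ht₀⟩
      · rw [h0, measure_empty]; exact zero_le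
      have hsub : Prod.mk y ⁻¹' S ⊆
          univ.pi fun i => Icc (t₀ i - 2 * R / k) (t₀ i + 2 * R / k) := by
        intro t ht i _
        have hq : quant k (V.transpose.mulVec (e.symm (y, t))) =
            quant k (V.transpose.mulVec (e.symm (y, t₀))) := by
          have h3 : f (y, t) = a := ht.1
          have h4 : f (y, t₀) = a := ht₀.1
          exact h3.trans h4.symm
        have hclose : ∀ j, |V.transpose.mulVec (e.symm (y, t)) j -
            V.transpose.mulVec (e.symm (y, t₀)) j| ≤ 2 / k := by
          intro j
          have h3 := abs_sub_qz_le hk (V.transpose.mulVec (e.symm (y, t)) j)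
          have h4 := abs_sub_qz_le hk (V.transpose.mulVec (e.symm (y, t₀)) j)
          have h5 : qz k (V.transpose.mulVec (e.symm (y, t)) j) =
            qz k (V.transpose.mulVec (e.symm (y, t₀)) j) := congrFun hq j
          rw [h5] at h3
          rw [abs_sub_comm] at h4
          have h6 := abs_sub_le (V.transpose.mulVec (e.symm (y, t)) j)
            (qz k (V.transpose.mulVec (e.symm (y, t₀)) j))
            (V.transpose.mulVec (e.symm (y, t₀)) j)
          have h7 : (2 : ℝ) / k = 1 / k + 1 / k := by ring
          linarith
        have h8 := abs_mulVec_sub_le V hclose i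
        rw [Matrix.mulVec_mulVec, Matrix.mulVec_mulVec, hV, Matrix.one_mulVec,
          Matrix.one_mulVec] at h8
        have h9 : ∀ s : {i // ¬ p i} → ℝ, e.symm (y, s) i = s i := by
          intro s
          have := congrArg Prod.snd (e.apply_symm_apply (y, s))
          exact congrFun this i
        rw [h9, h9, abs_le] at h8
        have h10 : 2 * R / k = R * (2 / k) := by ring
        rw [h10]
        constructor <;> linarith [h8.1, h8.2]
      refine (measure_mono hsub).trans (le_of_eq ?_)
      rw [volume_pi_pi]
      simp only [Real.volume_Icc]
      rw [ENNReal.ofReal_pow (by positivity), Finset.prod_congr rfl (g := fun _ =>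
        ENNReal.ofReal (4 * R / k)) (fun i _ => by congr 1; ring), Finset.prod_const,
        Finset.card_univ, hcard]
    · rw [indicator_of_notMem hy]
      refine le_of_eq (measure_mono_null (t := ∅) ?_ measure_empty)
      intro t ht
      exact hy ht.2
  rw [h1, h2]
  refine (hAS S hSm).trans ?_
  rw [Measure.prod_apply hSm]
  calc _ ≤ (B : ℝ≥0∞) * ∫⁻ y, (r ⁻¹' E).indicator
        (fun _ => ENNReal.ofReal ((4 * R / k) ^ (N - M))) y ∂η.fst := by
        gcongr
        exact hslice _
    _ = ENNReal.ofReal (B * (4 * R / k) ^ (N - M)) * η.fst (r ⁻¹' E) := by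
        rw [lintegral_indicator (hrm hE), setLIntegral_const, ← mul_assoc,
          ENNReal.ofReal_mul (by positivity), ENNReal.ofReal_natCast]
    _ ≤ _ := by
        gcongr ENNReal.ofReal ?_ * _
        rw [mul_assoc (B + 1 : ℝ), ← mul_pow, ← div_eq_mul_inv]
        gcongr <;> linarith

/-! ### Asymptotics -/

/-- Entropy lower bound: with `ℓ = (N - M) * log k - K` the conditional entropy is at least
`(1 - 2 * ε) * ℓ`, written without subtraction in `ℝ≥0∞`. -/
lemma exists_le_lintegral_eEnt_quant {Ω : Type*} [MeasurableSpace Ω] (P : Measure Ω)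
    [IsProbabilityMeasure P] {N M : ℕ} (hMN : M ≤ N) {X : Ω → Fin N → ℝ} (hX : Measurable X)
    (hac : P.map X ≪ volume) {V : Matrix (Fin N) (Fin N) ℝ}
    (hV : V * V.transpose = 1) {ε : ℝ} (hε : 0 < ε) :
    ∃ K : ℝ, ∀ k : ℕ, 0 < k → 0 ≤ ((N : ℝ) - M) * Real.log k - K →
      ENNReal.ofReal (((N : ℝ) - M) * Real.log k - K) ≤
      ∫⁻ y, eEnt (condDistrib (fun ω => quant k (X ω))
        (fun ω (i : Fin M) => V.mulVec (X ω) (Fin.castLE hMN i)) P y)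
          ∂(P.map fun ω (i : Fin M) => V.mulVec (X ω) (Fin.castLE hMN i)) +
      ENNReal.ofReal (2 * ε * (((N : ℝ) - M) * Real.log k - K)) := by
  obtain ⟨A, C, hC, hA, hA1, hbd⟩ := exists_event_cell_le P hMN hX hac hV
    (ENNReal.ofReal_pos.2 hε)
  refine ⟨Real.log (C / ε), fun k hk hℓ => ?_⟩
  have hk' : (0 : ℝ) < k := by exact_mod_cast hk
  set ℓ := ((N : ℝ) - M) * Real.log k - Real.log (C / ε) with hℓdef
  have hq : Measurable fun ω => quant k (X ω) := (measurable_quant k).comp hX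
  have hY : Measurable fun ω (i : Fin M) => V.mulVec (X ω) (Fin.castLE hMN i) :=
    measurable_pi_lambda _ fun i => (measurable_pi_apply _).comp ((measurable_mulVec V).comp hX)
  have h := le_lintegral_eEnt P hq hY (countable_lat N k) (fun ω => quant_mem_lat k (X ω)) hA
    _ (fun a _ E hE => hbd k hk a E hE) hℓ
  -- The level `ℓ` is the one at which the exceptional event has probability `ε`.
  have hexp : C * ((k : ℝ)⁻¹) ^ (N - M) * Real.exp ℓ = ε := by
    rw [hℓdef, Real.exp_sub, Real.exp_log (by positivity), ← Nat.cast_sub hMN,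
      mul_comm _ (Real.log _), Real.exp_mul, Real.exp_log hk', Real.rpow_natCast, inv_pow]
    field_simp
  rw [← ENNReal.ofReal_mul (by positivity), hexp] at h
  set D := ∫⁻ y, eEnt (condDistrib (fun ω => quant k (X ω))
        (fun ω (i : Fin M) => V.mulVec (X ω) (Fin.castLE hMN i)) P y)
          ∂(P.map fun ω (i : Fin M) => V.mulVec (X ω) (Fin.castLE hMN i))
  calc ENNReal.ofReal ℓ = ENNReal.ofReal ℓ * 1 := (mul_one _).symm
    _ ≤ ENNReal.ofReal ℓ * (P A + ENNReal.ofReal ε) := by gcongr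
    _ = ENNReal.ofReal ℓ * P A + ENNReal.ofReal ℓ * ENNReal.ofReal ε := mul_add _ _ _
    _ ≤ D + ENNReal.ofReal ℓ * ENNReal.ofReal ε + ENNReal.ofReal ℓ * ENNReal.ofReal ε := by gcongr
    _ = _ := by
        rw [add_assoc, ← ENNReal.ofReal_mul hℓ,
          ← ENNReal.ofReal_add (by positivity) (by positivity)]
        congr 2
        ring

lemma tendsto_log_natCast : Tendsto (fun k : ℕ => Real.log k) atTop atTop :=
  Real.tendsto_log_atTop.comp tendsto_natCast_atTop_atTop

lemma tendsto_affine_log_div (d K s : ℝ) :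
    Tendsto (fun k : ℕ => s * (d * Real.log k + K) / Real.log k) atTop (nhds (s * d)) := by
  have h := ((tendsto_log_natCast.const_div_atTop K).const_add d).const_mul s
  rw [add_zero] at h
  refine h.congr' ?_
  filter_upwards [tendsto_log_natCast.eventually_gt_atTop 0] with k hk
  field_simp

/-- Given `M` coordinates in an orthonormal basis, the quantized vector has conditional entropy
asymptotic to `(N - M) * log k`. -/
lemma tendsto_condEnt_div_log {Ω : Type*} [MeasurableSpace Ω] (P : Measure Ω)
    [IsProbabilityMeasure P] {N M : ℕ} (hMN : M < N) {X : Ω → Fin N → ℝ} (hX : Measurable X)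
    (hac : P.map X ≪ volume) (hint : ∀ i, Integrable (fun ω => X ω i) P)
    {V : Matrix (Fin N) (Fin N) ℝ} (hV : V * V.transpose = 1) :
    Tendsto (fun k : ℕ => condEnt P (fun ω => quant k (X ω))
      (fun ω (i : Fin M) => V.mulVec (X ω) (Fin.castLE hMN.le i)) / Real.log k) atTop
      (nhds ((N : ℝ) - M)) := by
  have hd : (0 : ℝ) < (N : ℝ) - M := by
    have : (M : ℝ) < N := by exact_mod_cast hMN
    linarith
  set d := (N : ℝ) - M with hddef
  set H : ℕ → ℝ := fun k => condEnt P (fun ω => quant k (X ω))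
      (fun ω (i : Fin M) => V.mulVec (X ω) (Fin.castLE hMN.le i)) with hH
  obtain ⟨K, hK, hup⟩ := lintegral_eEnt_quant_le P hMN.le hX hint hV
  set D : ℕ → ℝ≥0∞ := fun k => ∫⁻ y, eEnt (condDistrib (fun ω => quant k (X ω))
        (fun ω (i : Fin M) => V.mulVec (X ω) (Fin.castLE hMN.le i)) P y)
          ∂(P.map fun ω (i : Fin M) => V.mulVec (X ω) (Fin.castLE hMN.le i)) with hD
  have hDfin : ∀ k, 0 < k → D k ≠ ∞ := fun k hk =>
    ne_top_of_le_ne_top (ENNReal.add_ne_top.2 ⟨ENNReal.ofReal_ne_top, hK⟩) (hup k hk)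
  have hY : Measurable fun ω (i : Fin M) => V.mulVec (X ω) (Fin.castLE hMN.le i) :=
    measurable_pi_lambda _ fun i => (measurable_pi_apply _).comp ((measurable_mulVec V).comp hX)
  have hHD : ∀ k, 0 < k → H k = (D k).toReal := fun k hk =>
    condEnt_eq_toReal P ((measurable_quant k).comp hX) hY (countable_lat N k)
      (fun ω => quant_mem_lat k (X ω)) (hDfin k hk)
  have hlog : ∀ᶠ k : ℕ in atTop, 0 < Real.log k := tendsto_log_natCast.eventually_gt_atTop 0
  refine tendsto_order.2 ⟨fun a ha => ?_, fun a ha => ?_⟩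
  · obtain ⟨ε, hε, hεa⟩ : ∃ ε : ℝ, 0 < ε ∧ a < (1 - 2 * ε) * d := by
      refine ⟨(d - a) / (4 * d), by apply div_pos <;> linarith, ?_⟩
      have : (1 - 2 * ((d - a) / (4 * d))) * d = d - (d - a) / 2 := by field_simp; ring
      rw [this]; linarith
    obtain ⟨K', hlow⟩ := exists_le_lintegral_eEnt_quant P hMN.le hX hac hV hε
    have hlarge : ∀ᶠ k : ℕ in atTop, K' ≤ d * Real.log k :=
      (tendsto_log_natCast.const_mul_atTop hd).eventually_ge_atTop K'
    filter_upwards [(tendsto_order.1 (tendsto_affine_log_div d (-K') (1 - 2 * ε))).1 a hεa,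
      hlog, hlarge, eventually_gt_atTop 0] with k h1 h2 h3 h4
    refine h1.trans_le ?_
    gcongr
    have h5 := hlow k h4 (by linarith)
    have hℓ : 0 ≤ d * Real.log k - K' := by linarith
    have h6 := ENNReal.toReal_mono
      (ENNReal.add_ne_top.2 ⟨hDfin k h4, ENNReal.ofReal_ne_top⟩) h5
    rw [ENNReal.toReal_ofReal hℓ, ENNReal.toReal_add (hDfin k h4) ENNReal.ofReal_ne_top,
      ENNReal.toReal_ofReal (by positivity), ← hHD k h4] at h6
    linarith
  · have ha' : 1 * d < a := by linarith
    filter_upwards [(tendsto_order.1 (tendsto_affine_log_div d K.toReal 1)).2 a ha',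
      hlog, eventually_gt_atTop 0] with k h1 h2 h4
    refine lt_of_le_of_lt ?_ h1
    gcongr
    have h6 := ENNReal.toReal_mono (ENNReal.add_ne_top.2 ⟨ENNReal.ofReal_ne_top, hK⟩) (hup k h4)
    rw [ENNReal.toReal_add ENNReal.ofReal_ne_top hK, ENNReal.toReal_ofReal (by positivity)] at h6
    change H k ≤ _
    rw [hHD k h4]
    linarith

open Matrix in
/-- Let `X` be an `N`-dimensional random vector with `P_X ≪ λ^N`, zero mean
and positive definite covariance matrix `C_X = W Σ Wᵀ` (eigenvalue decomposition with
orthogonal `W`).  For the PCA output `Y = WᵀX` and the projection `Y_M = [Y₁,…,Y_M]` onto the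
first `M < N` coordinates, the relative information loss is `l(X→Y_M) = (N−M)/N`. -/
theorem relative_loss_PCA_population_projection
    {Ω : Type*} [MeasurableSpace Ω] (P : Measure Ω) [IsProbabilityMeasure P]
    {N M : ℕ} (hMN : M < N)
    (X : Ω → (Fin N → ℝ)) (hX : Measurable X)
    (hac : P.map X ≪ volume)
    (hmean : ∀ i, ∫ ω, X ω i ∂P = 0)
    (C : Matrix (Fin N) (Fin N) ℝ)
    (hC : ∀ i j, C i j = ∫ ω, X ω i * X ω j ∂P)
    (hCpos : C.PosDef)
    (W S : Matrix (Fin N) (Fin N) ℝ)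
    (hW : W * Wᵀ = 1) (hS : S.IsDiag) (hEVD : C = W * S * Wᵀ) :
    Tendsto (fun k : ℕ =>
        condEnt P (fun ω i => qz k (X ω i))
            (fun ω (i : Fin M) => Matrix.mulVec Wᵀ (X ω) (Fin.castLE hMN.le i)) /
          mEnt (P.map (fun ω i => qz k (X ω i)))) atTop
      (nhds (((N : ℝ) - M) / N)) := by
  have hV : Wᵀ * Wᵀᵀ = 1 := by rw [transpose_transpose]; exact mul_eq_one_comm.1 hW
  have hint : ∀ i, Integrable (fun ω => X ω i) P := by
    intro i
    -- A non-integrable square would have Bochner integral `0`, but `C i i > 0`.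
    have h2 : Integrable (fun ω => X ω i * X ω i) P :=
      Integrable.of_integral_ne_zero (by rw [← hC i i]; exact hCpos.diag_pos.ne')
    have hXi : AEStronglyMeasurable (fun ω => X ω i) P :=
      ((measurable_pi_apply i).comp hX).aestronglyMeasurable
    refine MemLp.integrable (q := 2) (by norm_num) ((memLp_two_iff_integrable_sq hXi).2 ?_)
    simpa only [sq] using h2
  have hN : 0 < N := by omega
  have hnum := tendsto_condEnt_div_log P hMN hX hac hint hV
  have hden := tendsto_condEnt_div_log P hN hX hac hint hV
  rw [Nat.cast_zero, sub_zero] at hden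
  refine (hnum.div hden (by exact_mod_cast hN.ne')).congr' ?_
  filter_upwards [tendsto_log_natCast.eventually_gt_atTop 0] with k hk
  have hY : Measurable fun ω (i : Fin 0) => (Wᵀ).mulVec (X ω) (Fin.castLE hN.le i) :=
    measurable_pi_lambda _ fun i => i.elim0
  have hZ : Measurable fun ω => quant k (X ω) := (measurable_quant k).comp hX
  rw [Pi.div_apply, condEnt_of_subsingleton P hZ hY,
    div_div_div_cancel_right₀ hk.ne']
  rfl
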